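/- Let a ∈ 𝔻, f₀ ∈ 𝒮^∞, let c₀, c₁, λ ∈ ℂ with |c₀| = |c₁| = |λ| = 1, let b ∈ 𝔻, and set ρ(z) = λ·(z − b)/(conj(b)·z − 1) for z ∈ 𝔻. Then the map T defined by T(f)(z) = f₀(z) + c₀·conj(f(a)) + ∫_{[a,z]} c₁·conj(f'(conj(ρ(ζ)))) dζ maps 𝒮^∞ into 𝒮^∞ and is a surjective isometry of 𝒮^∞ with respect to the norm ‖·‖_σ. -/

import Mathlib

open Complex Metric Set

/-- `f` belongs to `𝒮^∞`: `f` is analytic on the open unit disc `𝔻` and its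
derivative is bounded on `𝔻`. -/
def MemSInf (f : ℂ → ℂ) : Prop :=
  DifferentiableOn ℂ f (ball (0 : ℂ) 1) ∧
    ∃ M : ℝ, ∀ z ∈ ball (0 : ℂ) 1, ‖deriv f z‖ ≤ M

/-- The norm `‖f‖_σ = |f(a)| + sup_{w ∈ 𝔻} |f'(w)|`. -/
noncomputable def normSigmaA (a : ℂ) (f : ℂ → ℂ) : ℝ :=
  ‖f a‖ + ⨆ w : ball (0 : ℂ) 1, ‖deriv f (w : ℂ)‖

/-- The line integral `∫_{[a,z]} g(ζ) dζ = ∫₀¹ g(a + t(z − a))·(z − a) dt`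
along the straight segment from `a` to `z`. -/
noncomputable def lineInt (g : ℂ → ℂ) (a z : ℂ) : ℂ :=
  ∫ t in (0:ℝ)..1, g (a + (t : ℂ) * (z - a)) * (z - a)

/-!
Up to the translation by `f₀`, the map `T` is the real-linear operator
`S_τ f = c₀ · conj (f a) + ∫_{[a,·]} c₁ · conj (f' ∘ τ)`, where `τ = conj ∘ ρ` is an antiholomorphic
automorphism of the disc. As `(S_τ f) a = c₀ · conj (f a)` and `(S_τ f)' = c₁ · conj (f' ∘ τ)`, it
preserves both terms of the norm because `τ` permutes the disc. The inverse `τ'` of `τ` has the same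
shape, and `S_τ ∘ S_τ'` is the identity because `c₀` and `c₁` are unimodular.
-/

open scoped ComplexConjugate

local notation "𝔻" => ball (0 : ℂ) 1

lemma mul_conj_eq_one_of_norm_eq_one {c : ℂ} (hc : ‖c‖ = 1) : c * conj c = 1 := by
  rw [mul_conj', hc, ofReal_one, one_pow]

section LineIntegral

variable {F G : ℂ → ℂ} {a z : ℂ} {s : Set ℂ}

lemma lineInt_self (G : ℂ → ℂ) (a : ℂ) : lineInt G a a = 0 := by
  simp [lineInt]

lemma lineInt_eq_sub_of_hasDerivAt (hG : ContinuousOn G (segment ℝ a z))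
    (hF : ∀ w ∈ segment ℝ a z, HasDerivAt F (G w) w) : lineInt G a z = F z - F a := by
  have hseg : ∀ t ∈ Icc (0 : ℝ) 1, a + t • (z - a) ∈ segment ℝ a z := fun t ht =>
    segment_eq_image' ℝ a z ▸ mem_image_of_mem _ ht
  have hcont : ContinuousOn (fun t : ℝ => G (a + t • (z - a))) (Icc 0 1) :=
    hG.comp (by fun_prop) hseg
  simpa [lineInt, mul_comm] using
    intervalIntegral.integral_unitInterval_deriv_eq_sub hcont fun t ht => hF _ (hseg t ht)

lemma hasDerivAt_lineInt (hs : Convex ℝ s) (hso : IsOpen s) (hG : DifferentiableOn ℂ G s)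
    (ha : a ∈ s) (hz : z ∈ s) : HasDerivAt (lineInt G a) (G z) z := by
  obtain ⟨F, hF⟩ := hs.exists_forall_hasDerivWithinAt hG
  have hF' : ∀ w ∈ s, HasDerivAt F (G w) w := fun w hw => (hF w hw).hasDerivAt (hso.mem_nhds hw)
  have hprim : EqOn (lineInt G a) (fun w => F w - F a) s := fun w hw =>
    have hseg := hs.segment_subset ha hw
    lineInt_eq_sub_of_hasDerivAt (hG.continuousOn.mono hseg) fun v hv => hF' v (hseg hv)
  exact ((hF' z hz).sub_const (F a)).congr_of_eventuallyEq
    (hprim.eventuallyEq_of_mem (hso.mem_nhds hz))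

end LineIntegral

section BoundedDerivative

variable {f g f' : ℂ → ℂ} {a : ℂ} {M : ℝ}

lemma memSInf_of_hasDerivAt (hf : ∀ z ∈ 𝔻, HasDerivAt f (f' z) z) (hM : ∀ z ∈ 𝔻, ‖f' z‖ ≤ M) :
    MemSInf f :=
  ⟨fun z hz => (hf z hz).differentiableAt.differentiableWithinAt, M, fun z hz =>
    (hf z hz).deriv.symm ▸ hM z hz⟩

namespace MemSInf

lemma hasDerivAt (hf : MemSInf f) {z : ℂ} (hz : z ∈ 𝔻) : HasDerivAt f (deriv f z) z :=
  hf.1.hasDerivAt (isOpen_ball.mem_nhds hz)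

lemma add (hf : MemSInf f) (hg : MemSInf g) : MemSInf (f + g) := by
  obtain ⟨M, hM⟩ := hf.2
  obtain ⟨N, hN⟩ := hg.2
  exact memSInf_of_hasDerivAt (fun z hz => (hf.hasDerivAt hz).add (hg.hasDerivAt hz))
    fun z hz => norm_add_le_of_le (hM z hz) (hN z hz)

lemma sub (hf : MemSInf f) (hg : MemSInf g) : MemSInf (f - g) := by
  obtain ⟨M, hM⟩ := hf.2
  obtain ⟨N, hN⟩ := hg.2
  exact memSInf_of_hasDerivAt (fun z hz => (hf.hasDerivAt hz).sub (hg.hasDerivAt hz))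
    fun z hz => norm_sub_le_of_le (hM z hz) (hN z hz)

end MemSInf

lemma normSigmaA_congr (ha : a ∈ 𝔻) (hfg : EqOn f g 𝔻) : normSigmaA a f = normSigmaA a g := by
  have hderiv : EqOn (deriv f) (deriv g) 𝔻 := hfg.deriv isOpen_ball
  simp only [normSigmaA, hfg ha, hderiv (Subtype.coe_prop _)]

end BoundedDerivative

section ConjIntegral

/-- The real-linear part of the map `T`: the function with value `c₀ * conj (f a)` at `a` and
derivative `c₁ * conj (f' ∘ τ)`. It is meant for antiholomorphic `τ`, which is expressed as
differentiability of `conj ∘ τ`; the map `T` has `τ = conj ∘ ρ`. -/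
noncomputable def conjIntegral (a c₀ c₁ : ℂ) (τ f : ℂ → ℂ) (z : ℂ) : ℂ :=
  c₀ * conj (f a) + lineInt (fun ζ => c₁ * conj (deriv f (τ ζ))) a z

variable {a c₀ c₁ z : ℂ} {τ τ' f g : ℂ → ℂ} {s t : Set ℂ}

lemma conjIntegral_self (a c₀ c₁ : ℂ) (τ f : ℂ → ℂ) :
    conjIntegral a c₀ c₁ τ f a = c₀ * conj (f a) := by
  rw [conjIntegral, lineInt_self, add_zero]

lemma differentiableOn_conj_comp (ht : IsOpen t) (hf : DifferentiableOn ℂ f t)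
    (hτ : DifferentiableOn ℂ (conj ∘ τ) s) (hmaps : MapsTo τ s t) :
    DifferentiableOn ℂ (fun z => conj (f (τ z))) s := by
  intro z hz
  have hfz : DifferentiableAt ℂ (conj ∘ f ∘ conj) ((conj ∘ τ) z) :=
    (hf.differentiableAt (ht.mem_nhds (hmaps hz))).conj_conj
  simpa [Function.comp_def] using hfz.comp_differentiableWithinAt z (hτ z hz)

lemma hasDerivAt_conjIntegral_of_differentiableOn (hs : Convex ℝ s) (hso : IsOpen s)
    (ht : IsOpen t) (hf : DifferentiableOn ℂ f t) (hτ : DifferentiableOn ℂ (conj ∘ τ) s)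
    (hmaps : MapsTo τ s t) (ha : a ∈ s) (hz : z ∈ s) :
    HasDerivAt (conjIntegral a c₀ c₁ τ f) (c₁ * conj (deriv f (τ z))) z :=
  (hasDerivAt_lineInt hs hso
    ((differentiableOn_conj_comp ht (hf.deriv ht) hτ hmaps).const_mul c₁) ha hz).const_add _

lemma MemSInf.hasDerivAt_conjIntegral (hf : MemSInf f) (hτ : DifferentiableOn ℂ (conj ∘ τ) 𝔻)
    (hmaps : MapsTo τ 𝔻 𝔻) (ha : a ∈ 𝔻) (hz : z ∈ 𝔻) :
    HasDerivAt (conjIntegral a c₀ c₁ τ f) (c₁ * conj (deriv f (τ z))) z :=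
  hasDerivAt_conjIntegral_of_differentiableOn (convex_ball 0 1) isOpen_ball isOpen_ball hf.1 hτ
    hmaps ha hz

lemma MemSInf.conjIntegral (hf : MemSInf f) (hτ : DifferentiableOn ℂ (conj ∘ τ) 𝔻)
    (hmaps : MapsTo τ 𝔻 𝔻) (ha : a ∈ 𝔻) : MemSInf (conjIntegral a c₀ c₁ τ f) := by
  obtain ⟨M, hM⟩ := hf.2
  refine memSInf_of_hasDerivAt (M := ‖c₁‖ * M)
    (fun z hz => hf.hasDerivAt_conjIntegral hτ hmaps ha hz) fun z hz => ?_
  rw [norm_mul, RCLike.norm_conj]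
  exact mul_le_mul_of_nonneg_left (hM _ (hmaps hz)) (norm_nonneg c₁)

lemma eqOn_conjIntegral_sub (hf : MemSInf f) (hg : MemSInf g)
    (hτ : DifferentiableOn ℂ (conj ∘ τ) 𝔻) (hmaps : MapsTo τ 𝔻 𝔻) (ha : a ∈ 𝔻) :
    EqOn (conjIntegral a c₀ c₁ τ f - conjIntegral a c₀ c₁ τ g)
      (conjIntegral a c₀ c₁ τ (f - g)) 𝔻 := by
  refine isOpen_ball.eqOn_of_deriv_eq (convex_ball 0 1).isPreconnected
    ((hf.conjIntegral hτ hmaps ha).sub (hg.conjIntegral hτ hmaps ha)).1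
    ((hf.sub hg).conjIntegral hτ hmaps ha).1 (fun z hz => ?_) ha ?_
  · rw [((hf.hasDerivAt_conjIntegral hτ hmaps ha hz).sub
        (hg.hasDerivAt_conjIntegral hτ hmaps ha hz)).deriv,
      ((hf.sub hg).hasDerivAt_conjIntegral hτ hmaps ha hz).deriv,
      ((hf.hasDerivAt (hmaps hz)).sub (hg.hasDerivAt (hmaps hz))).deriv, map_sub, mul_sub]
  · simp only [Pi.sub_apply, conjIntegral_self, map_sub, mul_sub]

lemma normSigmaA_conjIntegral (hf : MemSInf f) (hc₀ : ‖c₀‖ = 1) (hc₁ : ‖c₁‖ = 1)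
    (hτ : DifferentiableOn ℂ (conj ∘ τ) 𝔻) (hmaps : MapsTo τ 𝔻 𝔻) (hsurj : SurjOn τ 𝔻 𝔻)
    (ha : a ∈ 𝔻) : normSigmaA a (conjIntegral a c₀ c₁ τ f) = normSigmaA a f := by
  have hval : ‖conjIntegral a c₀ c₁ τ f a‖ = ‖f a‖ := by
    rw [conjIntegral_self, norm_mul, hc₀, one_mul, RCLike.norm_conj]
  have hderiv (w : 𝔻) : ‖deriv f (τ w)‖ = ‖deriv (conjIntegral a c₀ c₁ τ f) w‖ := by
    rw [(hf.hasDerivAt_conjIntegral hτ hmaps ha w.2).deriv, norm_mul, hc₁, one_mul,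
      RCLike.norm_conj]
  have hsup : ⨆ w : 𝔻, ‖deriv (conjIntegral a c₀ c₁ τ f) w‖ = ⨆ w : 𝔻, ‖deriv f w‖ :=
    (hmaps.restrict_surjective_iff.2 hsurj).iSup_congr _ hderiv
  rw [normSigmaA, normSigmaA, hval, hsup]

lemma eqOn_conjIntegral_conjIntegral (hf : MemSInf f) (hc₀ : ‖c₀‖ = 1) (hc₁ : ‖c₁‖ = 1)
    (hτ : DifferentiableOn ℂ (conj ∘ τ) 𝔻) (hmaps : MapsTo τ 𝔻 𝔻)
    (hτ' : DifferentiableOn ℂ (conj ∘ τ') 𝔻) (hmaps' : MapsTo τ' 𝔻 𝔻)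
    (hinv : LeftInvOn τ' τ 𝔻) (ha : a ∈ 𝔻) :
    EqOn (conjIntegral a c₀ c₁ τ (conjIntegral a c₀ c₁ τ' f)) f 𝔻 := by
  have cancel {c : ℂ} (hc : ‖c‖ = 1) (w : ℂ) : c * conj (c * conj w) = w := by
    rw [map_mul, conj_conj, ← mul_assoc, mul_conj_eq_one_of_norm_eq_one hc, one_mul]
  have hf' : MemSInf (conjIntegral a c₀ c₁ τ' f) := hf.conjIntegral hτ' hmaps' ha
  refine isOpen_ball.eqOn_of_deriv_eq (convex_ball 0 1).isPreconnected
    (hf'.conjIntegral hτ hmaps ha).1 hf.1 (fun z hz => ?_) ha ?_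
  · rw [(hf'.hasDerivAt_conjIntegral hτ hmaps ha hz).deriv,
      (hf.hasDerivAt_conjIntegral hτ' hmaps' ha (hmaps hz)).deriv, hinv hz, cancel hc₁]
  · rw [conjIntegral_self, conjIntegral_self, cancel hc₀]

end ConjIntegral

section DiscAutomorphism

/-- The antiholomorphic automorphism `z ↦ conj (lam * (z - b) / (conj b * z - 1))` of the unit disc,
for `‖lam‖ = 1` and `‖b‖ < 1`. Composing the Möbius map with `conj` makes the family closed under
inversion with the same `lam`. -/
noncomputable def antiDiscAut (lam b z : ℂ) : ℂ :=
  conj (lam * (z - b) / (conj b * z - 1))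

variable {lam b z : ℂ}

lemma conj_mul_sub_one_ne_zero (hb : ‖b‖ < 1) (hz : ‖z‖ ≤ 1) : conj b * z - 1 ≠ 0 := by
  refine sub_ne_zero.2 fun h => ?_
  have hnorm : ‖b‖ * ‖z‖ = 1 := by simpa using congrArg norm h
  exact (mul_lt_one_of_nonneg_of_lt_one_left (norm_nonneg b) hb hz).ne hnorm

lemma normSq_conj_mul_sub_one_sub_normSq_sub (b z : ℂ) :
    normSq (conj b * z - 1) - normSq (z - b) = (1 - normSq b) * (1 - normSq z) := by
  simp only [normSq_apply, sub_re, sub_im, mul_re, mul_im, conj_re, conj_im, one_re, one_im]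
  ring

lemma norm_sub_lt_norm_conj_mul_sub_one (hb : ‖b‖ < 1) (hz : ‖z‖ < 1) :
    ‖z - b‖ < ‖conj b * z - 1‖ := by
  have one_sub_normSq_pos {w : ℂ} (hw : ‖w‖ < 1) : 0 < 1 - normSq w := by
    rw [normSq_eq_norm_sq, sub_pos]
    exact pow_lt_one₀ (norm_nonneg w) hw two_ne_zero
  rw [← sq_lt_sq₀ (norm_nonneg _) (norm_nonneg _), ← normSq_eq_norm_sq, ← normSq_eq_norm_sq,
    ← sub_pos, normSq_conj_mul_sub_one_sub_normSq_sub]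
  exact mul_pos (one_sub_normSq_pos hb) (one_sub_normSq_pos hz)

lemma differentiableOn_conj_comp_antiDiscAut (lam : ℂ) (hb : ‖b‖ < 1) :
    DifferentiableOn ℂ (conj ∘ antiDiscAut lam b) 𝔻 := by
  have hden : ∀ z ∈ 𝔻, conj b * z - 1 ≠ 0 := fun z hz =>
    conj_mul_sub_one_ne_zero hb (mem_ball_zero_iff.1 hz).le
  simp only [Function.comp_def, antiDiscAut, conj_conj]
  fun_prop (disch := assumption)

lemma mapsTo_antiDiscAut (hlam : ‖lam‖ = 1) (hb : ‖b‖ < 1) : MapsTo (antiDiscAut lam b) 𝔻 𝔻 := by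
  intro z hz
  rw [mem_ball_zero_iff] at hz ⊢
  rw [antiDiscAut, RCLike.norm_conj, norm_div, norm_mul, hlam, one_mul]
  exact (div_lt_one ((norm_nonneg _).trans_lt (norm_sub_lt_norm_conj_mul_sub_one hb hz))).2
    (norm_sub_lt_norm_conj_mul_sub_one hb hz)

lemma norm_conj_mul_lt_one (hlam : ‖lam‖ = 1) (hb : ‖b‖ < 1) : ‖conj (lam * b)‖ < 1 := by
  rwa [RCLike.norm_conj, norm_mul, hlam, one_mul]

lemma leftInvOn_antiDiscAut (hlam : ‖lam‖ = 1) (hb : ‖b‖ < 1) :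
    LeftInvOn (antiDiscAut lam (conj (lam * b))) (antiDiscAut lam b) 𝔻 := by
  intro z hz
  have hden := conj_mul_sub_one_ne_zero hb (mem_ball_zero_iff.1 hz).le
  have hden' := conj_mul_sub_one_ne_zero (norm_conj_mul_lt_one hlam hb)
    (mem_ball_zero_iff.1 (mapsTo_antiDiscAut hlam hb hz)).le
  have hw : antiDiscAut lam b z * (b * conj z - 1) = conj lam * (conj z - conj b) := by
    simpa [antiDiscAut] using congrArg conj (div_mul_cancel₀ (lam * (z - b)) hden)
  generalize antiDiscAut lam b z = w at hw hden' ⊢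
  rw [antiDiscAut, ← conj_conj z, (starRingEnd ℂ).injective.eq_iff, div_eq_iff hden',
    conj_conj, map_mul]
  linear_combination -lam * hw - conj z * mul_conj_eq_one_of_norm_eq_one hlam

lemma surjOn_antiDiscAut (hlam : ‖lam‖ = 1) (hb : ‖b‖ < 1) : SurjOn (antiDiscAut lam b) 𝔻 𝔻 := by
  have hb' := norm_conj_mul_lt_one hlam hb
  have hinvol : conj (lam * conj (lam * b)) = b := by
    rw [map_mul, conj_conj, mul_left_comm, ← mul_assoc, mul_conj_eq_one_of_norm_eq_one hlam,
      one_mul]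
  have hinv := leftInvOn_antiDiscAut hlam hb'
  rw [hinvol] at hinv
  exact hinv.surjOn (mapsTo_antiDiscAut hlam hb')

end DiscAutomorphism

theorem conj_conj_integral_form_is_surjective_isometry_normSigmaA
    (a : ℂ) (ha : a ∈ ball (0 : ℂ) 1)
    (f₀ : ℂ → ℂ) (hf₀ : MemSInf f₀)
    (c₀ c₁ lam : ℂ) (hc₀ : ‖c₀‖ = 1) (hc₁ : ‖c₁‖ = 1) (hlam : ‖lam‖ = 1)
    (b : ℂ) (hb : b ∈ ball (0 : ℂ) 1)
    (ρ : ℂ → ℂ) (hρ : ∀ z, ρ z = lam * (z - b) / ((starRingEnd ℂ) b * z - 1))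
    (T : (ℂ → ℂ) → (ℂ → ℂ))
    (hT : ∀ f z, T f z = f₀ z + c₀ * (starRingEnd ℂ) (f a) + lineInt (fun ζ => c₁ * (starRingEnd ℂ) (deriv f ((starRingEnd ℂ) (ρ ζ)))) a z) :
    (∀ f, MemSInf f → MemSInf (T f)) ∧
    (∀ g, MemSInf g → ∃ f, MemSInf f ∧ Set.EqOn (T f) g (ball (0 : ℂ) 1)) ∧
    (∀ f g, MemSInf f → MemSInf g →
      normSigmaA a (T f - T g) = normSigmaA a (f - g)) := by
  rw [mem_ball_zero_iff] at hb
  have hTS (f) : T f = f₀ + conjIntegral a c₀ c₁ (antiDiscAut lam b) f := by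
    ext z
    simp only [hT, hρ, Pi.add_apply, conjIntegral, antiDiscAut, add_assoc]
  have hτ := differentiableOn_conj_comp_antiDiscAut lam hb
  have hmaps := mapsTo_antiDiscAut hlam hb
  have hb' := norm_conj_mul_lt_one hlam hb
  have hτ' := differentiableOn_conj_comp_antiDiscAut lam hb'
  have hmaps' := mapsTo_antiDiscAut hlam hb'
  refine ⟨fun f hf => ?_, fun g hg => ?_, fun f g hf hg => ?_⟩
  · rw [hTS]
    exact hf₀.add (hf.conjIntegral hτ hmaps ha)
  · have hh : MemSInf (g - f₀) := hg.sub hf₀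
    refine ⟨_, hh.conjIntegral (c₀ := c₀) (c₁ := c₁) hτ' hmaps' ha, fun z hz => ?_⟩
    rw [hTS, Pi.add_apply, eqOn_conjIntegral_conjIntegral hh hc₀ hc₁ hτ hmaps hτ' hmaps'
      (leftInvOn_antiDiscAut hlam hb) ha hz, Pi.sub_apply, add_sub_cancel]
  · rw [hTS, hTS, add_sub_add_left_eq_sub,
      normSigmaA_congr ha (eqOn_conjIntegral_sub hf hg hτ hmaps ha),
      normSigmaA_conjIntegral (hf.sub hg) hc₀ hc₁ hτ hmaps (surjOn_antiDiscAut hlam hb) ha]
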